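/- Let d ≥ 1 and σ > 0. Let g : ℝ^d → ℝ be measurable and square-integrable with ∫_{ℝ^d} g(x)² dx > 0 (i.e. g is not almost everywhere zero). Then ∫_{ℝ^d} ∫_{ℝ^d} g(x) · exp( −‖x−x'‖² / (2σ²) ) · g(x') dx dx' > 0 (the double integral being absolutely convergent). -/

import Mathlib

open MeasureTheory

/-!
Write `k_a(x, y) = exp (-a ‖x - y‖²)`. By the parallelogram law
`k_{2a}(x, z) k_{2a}(y, z) = k_a(x, y) k_{4a}(z, m)` with `m` the midpoint of `x` and `y`.
Integrating in `z` shows that the energy `∬ g(x) k_a(x, y) g(y)` is, up to a positive constant, the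
squared `L²` norm of the Gaussian transform `T(z) = ∫ k_{2a}(x, z) g(x)`. Convergence of the energy
makes `k_a(·, y) g` integrable for some `y`; it dominates `k_{2a}(·, z) g` locally uniformly in `z`,
so `T` is defined everywhere and continuous. If the energy is not positive then `T` vanishes almost
everywhere, hence everywhere. Expanding the square in `k_{2a}(x, z)`, the Laplace transform of
`exp (-2a ‖x‖²) g(x)` vanishes identically, so `g = 0` by uniqueness of Laplace transforms.
-/

open Filter Topology ProbabilityTheory
open scoped RealInnerProductSpace

section LaplaceTransform

variable {V : Type*} [NormedAddCommGroup V] [InnerProductSpace ℝ V] [CompleteSpace V]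
  [SecondCountableTopology V] [MeasurableSpace V] [BorelSpace V]

theorem measure_ext_of_integral_exp_inner {μ ν : Measure V} [IsFiniteMeasure μ] [IsFiniteMeasure ν]
    (hμ : ∀ w : V, Integrable (fun x => Real.exp ⟪w, x⟫) μ)
    (h : ∀ w : V, ∫ x, Real.exp ⟪w, x⟫ ∂μ = ∫ x, Real.exp ⟪w, x⟫ ∂ν) : μ = ν := by
  have zero_iff : μ = 0 ↔ ν = 0 := by
    have mass_eq : μ.real Set.univ = ν.real Set.univ := by simpa using h 0
    rw [← Measure.measure_univ_eq_zero, ← Measure.measure_univ_eq_zero, ← measureReal_eq_zero_iff,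
      ← measureReal_eq_zero_iff, mass_eq]
  refine Measure.ext_of_charFun (funext fun w => ?_)
  have mgf_eq : mgf (fun x => ⟪w, x⟫) μ = mgf (fun x => ⟪w, x⟫) ν := by
    ext t
    simpa only [mgf, real_inner_smul_left] using h (t • w)
  have expSet_eq : integrableExpSet (fun x => ⟪w, x⟫) μ = Set.univ :=
    Set.eq_univ_of_forall fun t => by
      simpa only [integrableExpSet, Set.mem_ofPred_eq, real_inner_smul_left] using hμ (t • w)
  have complexMGF_eq :=
    eqOn_complexMGF_of_mgf' mgf_eq zero_iff (x := Complex.I) (by simp [expSet_eq])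
  simpa only [complexMGF, charFun_apply, mul_comm Complex.I, real_inner_comm w] using complexMGF_eq

variable {μ : Measure V}

theorem ae_eq_of_integral_exp_inner_mul_eq {p q : V → ℝ} (hp_nonneg : 0 ≤ p) (hq_nonneg : 0 ≤ q)
    (hp : ∀ w : V, Integrable (fun x => Real.exp ⟪w, x⟫ * p x) μ) (hq : Integrable q μ)
    (h : ∀ w : V, ∫ x, Real.exp ⟪w, x⟫ * p x ∂μ = ∫ x, Real.exp ⟪w, x⟫ * q x ∂μ) :
    p =ᵐ[μ] q := by
  have hp_int : Integrable p μ := by simpa using hp 0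
  have hp_meas := hp_int.aemeasurable.ennreal_ofReal
  have hq_meas := hq.aemeasurable.ennreal_ofReal
  have := isFiniteMeasure_withDensity_ofReal hp_int.2
  have := isFiniteMeasure_withDensity_ofReal hq.2
  have density_eq : μ.withDensity (fun x => ENNReal.ofReal (p x)) =
      μ.withDensity (fun x => ENNReal.ofReal (q x)) := by
    refine measure_ext_of_integral_exp_inner (fun w => ?_) (fun w => ?_)
    · rw [integrable_withDensity_iff_integrable_smul₀' hp_meas (by simp)]
      simpa only [ENNReal.toReal_ofReal (hp_nonneg _), smul_eq_mul, mul_comm] using hp w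
    · rw [integral_withDensity_eq_integral_toReal_smul₀ hp_meas (by simp),
        integral_withDensity_eq_integral_toReal_smul₀ hq_meas (by simp)]
      simpa only [ENNReal.toReal_ofReal (hp_nonneg _), ENNReal.toReal_ofReal (hq_nonneg _),
        smul_eq_mul, mul_comm] using h w
  filter_upwards [(withDensity_eq_iff hp_meas hq_meas hp_int.lintegral_lt_top.ne).1 density_eq]
    with x hx
  exact (ENNReal.ofReal_eq_ofReal_iff (hp_nonneg x) (hq_nonneg x)).1 hx

theorem ae_eq_zero_of_integral_exp_inner_mul_eq_zero {f : V → ℝ}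
    (hf : ∀ w : V, Integrable (fun x => Real.exp ⟪w, x⟫ * f x) μ)
    (h : ∀ w : V, ∫ x, Real.exp ⟪w, x⟫ * f x ∂μ = 0) : f =ᵐ[μ] 0 := by
  have hf_int : Integrable f μ := by simpa using hf 0
  have hf_abs (w : V) : Integrable (fun x => Real.exp ⟪w, x⟫ * |f x|) μ := by
    simpa only [abs_mul, Real.abs_exp] using (hf w).abs
  -- Uniqueness concerns nonnegative densities, so compare `|f|` with `|f| + f`.
  have abs_ae_eq : (fun x => |f x|) =ᵐ[μ] fun x => |f x| + f x := by
    refine ae_eq_of_integral_exp_inner_mul_eq (fun x => abs_nonneg _)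
      (fun x => neg_le_iff_add_nonneg'.1 (neg_abs_le (f x))) hf_abs (hf_int.abs.add hf_int)
      fun w => ?_
    simp only [mul_add, integral_add (hf_abs w) (hf w), h w, add_zero]
  filter_upwards [abs_ae_eq] with x hx
  simpa using hx

end LaplaceTransform

theorem integrable_mul_comp_sub_mul_of_memLp_two {G : Type*} [AddCommGroup G] [MeasurableSpace G]
    [MeasurableAdd₂ G] [MeasurableNeg G] {μ : Measure G} [SFinite μ] [μ.IsAddLeftInvariant]
    [μ.IsNegInvariant] {k f g : G → ℝ} (hk : Integrable k μ) (hf : MemLp f 2 μ)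
    (hg : MemLp g 2 μ) :
    Integrable (fun p : G × G => f p.1 * k (p.1 - p.2) * g p.2) (μ.prod μ) := by
  have f_sq : Integrable (fun p : G × G => f p.1 ^ 2 * k (p.1 - p.2)) (μ.prod μ) := by
    simpa [Function.comp_def] using
      (hf.integrable_sq.convolution_integrand (.mul ℝ ℝ) hk.comp_neg).swap
  have g_sq : Integrable (fun p : G × G => g p.2 ^ 2 * k (p.1 - p.2)) (μ.prod μ) :=
    hg.integrable_sq.convolution_integrand (.mul ℝ ℝ) hk
  have k_meas : AEStronglyMeasurable (fun p : G × G => k (p.1 - p.2)) (μ.prod μ) :=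
    hk.1.comp_quasiMeasurePreserving (quasiMeasurePreserving_sub_of_right_invariant μ μ)
  refine (f_sq.norm.add g_sq.norm).mono' ((hf.1.comp_fst.mul k_meas).mul hg.1.comp_snd)
    (.of_forall fun p => ?_)
  have abs_mul_abs_le : |f p.1| * |g p.2| ≤ f p.1 ^ 2 + g p.2 ^ 2 := by
    rw [← sq_abs (f p.1), ← sq_abs (g p.2)]
    nlinarith [two_mul_le_add_sq |f p.1| |g p.2|, abs_nonneg (f p.1), abs_nonneg (g p.2)]
  calc ‖f p.1 * k (p.1 - p.2) * g p.2‖ = |f p.1| * |g p.2| * |k (p.1 - p.2)| := by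
        rw [Real.norm_eq_abs, abs_mul, abs_mul, mul_right_comm]
    _ ≤ (f p.1 ^ 2 + g p.2 ^ 2) * |k (p.1 - p.2)| := by gcongr
    _ = ‖f p.1 ^ 2 * k (p.1 - p.2)‖ + ‖g p.2 ^ 2 * k (p.1 - p.2)‖ := by
        simp only [Real.norm_eq_abs, abs_mul, abs_sq, add_mul]

section GaussianKernel

/-- The Gaussian kernel of bandwidth `σ` is `gaussianKernel (1 / (2 * σ ^ 2))`. It is parametrized
by the coefficient `a` in the exponent because the argument doubles this coefficient. -/
noncomputable def gaussianKernel {V : Type*} [NormedAddCommGroup V] (a : ℝ) (x y : V) : ℝ :=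
  Real.exp (-a * ‖x - y‖ ^ 2)

/-- The Gaussian transform `z ↦ ∫ exp (-a ‖x - z‖²) g(x) dμ(x)` of `g`. -/
noncomputable def gaussianTransform {V : Type*} [NormedAddCommGroup V] [MeasurableSpace V] (a : ℝ)
    (μ : Measure V) (g : V → ℝ) (z : V) : ℝ :=
  ∫ x, gaussianKernel a x z * g x ∂μ

variable {V : Type*} [NormedAddCommGroup V] {a : ℝ}

theorem gaussianKernel_pos (a : ℝ) (x y : V) : 0 < gaussianKernel a x y :=
  Real.exp_pos _

@[fun_prop]
theorem continuous_gaussianKernel (a : ℝ) :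
    Continuous fun p : V × V => gaussianKernel a p.1 p.2 := by
  unfold gaussianKernel
  fun_prop

theorem gaussianKernel_two_mul_le (ha : 0 ≤ a) (x y z : V) :
    gaussianKernel (2 * a) x z ≤ Real.exp (2 * a * ‖z - y‖ ^ 2) * gaussianKernel a x y := by
  have dist_sq : ‖x - y‖ ^ 2 ≤ 2 * (‖x - z‖ ^ 2 + ‖z - y‖ ^ 2) :=
    (pow_le_pow_left₀ (norm_nonneg _) (norm_sub_le_norm_sub_add_norm_sub x z y) 2).trans add_sq_le
  rw [gaussianKernel, gaussianKernel, ← Real.exp_add, Real.exp_le_exp]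
  linear_combination a * dist_sq

theorem norm_gaussianKernel_two_mul_mul_le (ha : 0 ≤ a) (g : V → ℝ) (x y z : V) :
    ‖gaussianKernel (2 * a) x z * g x‖ ≤
      Real.exp (2 * a * ‖z - y‖ ^ 2) * ‖gaussianKernel a x y * g x‖ := by
  rw [norm_mul, norm_mul, ← mul_assoc, Real.norm_of_nonneg (gaussianKernel_pos _ _ _).le,
    Real.norm_of_nonneg (gaussianKernel_pos _ _ _).le]
  gcongr
  exact gaussianKernel_two_mul_le ha x y z

section Transform

variable [MeasurableSpace V] {μ : Measure V} {g : V → ℝ} {y : V}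

theorem exists_integrable_gaussianKernel_mul [SFinite μ]
    (hint : Integrable (fun p : V × V => g p.1 * gaussianKernel a p.1 p.2 * g p.2) (μ.prod μ))
    (hg : ¬ g =ᵐ[μ] 0) : ∃ y, Integrable (fun x => gaussianKernel a x y * g x) μ := by
  obtain ⟨y, hy_ne, hy⟩ := (not_eventually.1 hg).and_eventually hint.prod_left_ae |>.exists
  refine ⟨y, (hy.mul_const (g y)⁻¹).congr (.of_forall fun x => ?_)⟩
  exact (mul_inv_cancel_right₀ hy_ne _).trans (mul_comm _ _)

variable [BorelSpace V]

theorem aestronglyMeasurable_gaussianKernel_mul (b : ℝ) (z : V)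
    (hg : Integrable (fun x => gaussianKernel a x y * g x) μ) :
    AEStronglyMeasurable (fun x => gaussianKernel b x z * g x) μ := by
  have ratio_cont : Continuous fun x => gaussianKernel b x z / gaussianKernel a x y :=
    Continuous.div (by fun_prop) (by fun_prop) fun x => (gaussianKernel_pos a x y).ne'
  refine (ratio_cont.aestronglyMeasurable.mul hg.aestronglyMeasurable).congr
    (.of_forall fun x => ?_)
  simp only [Pi.mul_apply, ← mul_assoc, div_mul_cancel₀ _ (gaussianKernel_pos a x y).ne']

theorem integrable_gaussianKernel_two_mul_mul (ha : 0 ≤ a)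
    (hg : Integrable (fun x => gaussianKernel a x y * g x) μ) (z : V) :
    Integrable (fun x => gaussianKernel (2 * a) x z * g x) μ :=
  (hg.norm.const_mul _).mono' (aestronglyMeasurable_gaussianKernel_mul _ z hg)
    (.of_forall fun x => norm_gaussianKernel_two_mul_mul_le ha g x y z)

theorem continuous_gaussianTransform_two_mul (ha : 0 ≤ a)
    (hg : Integrable (fun x => gaussianKernel a x y * g x) μ) :
    Continuous (gaussianTransform (2 * a) μ g) := by
  refine continuous_iff_continuousAt.2 fun z₀ => ?_
  have factor_le : ∀ᶠ z in 𝓝 z₀,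
      Real.exp (2 * a * ‖z - y‖ ^ 2) ≤ Real.exp (2 * a * ‖z₀ - y‖ ^ 2) + 1 :=
    Tendsto.eventually_le_const (lt_add_one _) (Continuous.tendsto (by fun_prop) z₀)
  refine continuousAt_of_dominated
    (.of_forall fun z => aestronglyMeasurable_gaussianKernel_mul _ z hg) ?_
    (hg.norm.const_mul (Real.exp (2 * a * ‖z₀ - y‖ ^ 2) + 1))
    (.of_forall fun x => by fun_prop)
  filter_upwards [factor_le] with z hz
  refine .of_forall fun x => (norm_gaussianKernel_two_mul_mul_le ha g x y z).trans ?_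
  gcongr

end Transform

section InnerProductSpace

variable [InnerProductSpace ℝ V]

theorem gaussianKernel_two_mul_mul_gaussianKernel_two_mul (a : ℝ) (x y z : V) :
    gaussianKernel (2 * a) x z * gaussianKernel (2 * a) y z =
      gaussianKernel a x y * gaussianKernel (4 * a) z (midpoint ℝ x y) := by
  have parallelogram := parallelogram_law_with_norm ℝ (x - z) (y - z)
  have sum_eq : x - z + (y - z) = (-2 : ℝ) • (z - midpoint ℝ x y) := by
    rw [midpoint_eq_smul_add, invOf_eq_inv]
    module
  rw [sum_eq, sub_sub_sub_cancel_right, norm_smul, Real.norm_eq_abs, abs_neg, abs_two]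
    at parallelogram
  simp only [gaussianKernel, ← Real.exp_add]
  congr 1
  linear_combination a * parallelogram

theorem gaussianTransform_two_mul_sq [MeasurableSpace V] (a : ℝ) (μ : Measure V)
    [SFinite μ] (g : V → ℝ) (z : V) :
    gaussianTransform (2 * a) μ g z ^ 2 = ∫ p : V × V, g p.1 * gaussianKernel a p.1 p.2 * g p.2 *
      gaussianKernel (4 * a) z (midpoint ℝ p.1 p.2) ∂(μ.prod μ) := by
  rw [sq, gaussianTransform, ← integral_prod_mul]
  refine integral_congr_ae (.of_forall fun p => ?_)
  linear_combination g p.1 * g p.2 *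
    gaussianKernel_two_mul_mul_gaussianKernel_two_mul a p.1 p.2 z

theorem exp_inner_mul_gaussianKernel_zero (ha : a ≠ 0) (w x : V) :
    Real.exp ⟪w, x⟫ * gaussianKernel a x 0 =
      Real.exp (‖w‖ ^ 2 / (4 * a)) * gaussianKernel a x ((2 * a)⁻¹ • w) := by
  simp only [gaussianKernel, ← Real.exp_add, sub_zero]
  congr 1
  rw [norm_sub_sq_real, inner_smul_right, real_inner_comm, norm_smul, mul_pow, Real.norm_eq_abs,
    sq_abs]
  field_simp
  ring

theorem ae_eq_zero_of_gaussianTransform_eq_zero [CompleteSpace V] [SecondCountableTopology V]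
    [MeasurableSpace V] [BorelSpace V] {μ : Measure V} {g : V → ℝ} (ha : a ≠ 0)
    (hint : ∀ z, Integrable (fun x => gaussianKernel a x z * g x) μ)
    (h : gaussianTransform a μ g = 0) : g =ᵐ[μ] 0 := by
  have exp_inner_mul (w x : V) : Real.exp ⟪w, x⟫ * (gaussianKernel a x 0 * g x) =
      Real.exp (‖w‖ ^ 2 / (4 * a)) * (gaussianKernel a x ((2 * a)⁻¹ • w) * g x) := by
    rw [← mul_assoc, exp_inner_mul_gaussianKernel_zero ha, mul_assoc]
  have weighted_ae_zero : (fun x => gaussianKernel a x 0 * g x) =ᵐ[μ] 0 := by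
    refine ae_eq_zero_of_integral_exp_inner_mul_eq_zero (fun w => ?_) (fun w => ?_)
    · simpa only [exp_inner_mul] using (hint _).const_mul _
    · simp only [exp_inner_mul, integral_const_mul]
      exact mul_eq_zero_of_right _ (congrFun h _)
  filter_upwards [weighted_ae_zero] with x hx
  exact (mul_eq_zero.1 hx).resolve_left (gaussianKernel_pos a x 0).ne'

variable [FiniteDimensional ℝ V] [MeasurableSpace V] [BorelSpace V]

theorem integral_gaussianKernel (ha : 0 < a) (y : V) :
    ∫ x, gaussianKernel a x y = (Real.pi / a) ^ (Module.finrank ℝ V / 2 : ℝ) := by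
  rw [← GaussianFourier.integral_rexp_neg_mul_sq_norm ha]
  exact integral_sub_right_eq_self (fun x : V => Real.exp (-a * ‖x‖ ^ 2)) y

theorem integrable_gaussianKernel (ha : 0 < a) (y : V) :
    Integrable fun x => gaussianKernel a x y := by
  refine .of_integral_ne_zero ?_
  rw [integral_gaussianKernel ha]
  positivity

variable {μ : Measure V} {g : V → ℝ}

theorem integrable_prod_gaussianKernel_midpoint (ha : 0 < a)
    (hint : Integrable (fun p : V × V => g p.1 * gaussianKernel a p.1 p.2 * g p.2) (μ.prod μ)) :
    Integrable (fun q : (V × V) × V => g q.1.1 * gaussianKernel a q.1.1 q.1.2 * g q.1.2 *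
      gaussianKernel (4 * a) q.2 (midpoint ℝ q.1.1 q.1.2)) ((μ.prod μ).prod volume) := by
  have kernel_cont : Continuous fun q : (V × V) × V =>
      gaussianKernel (4 * a) q.2 (midpoint ℝ q.1.1 q.1.2) := by
    simp only [midpoint_eq_smul_add]
    fun_prop
  have h4a : 0 < 4 * a := by positivity
  rw [integrable_prod_iff (by
    exact hint.aestronglyMeasurable.comp_fst.mul kernel_cont.aestronglyMeasurable)]
  constructor
  · exact .of_forall fun p => (integrable_gaussianKernel h4a (midpoint ℝ p.1 p.2)).const_mul
      (g p.1 * gaussianKernel a p.1 p.2 * g p.2)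
  · simpa only [norm_mul, Real.norm_of_nonneg (gaussianKernel_pos (4 * a) _ _).le,
      integral_const_mul, integral_gaussianKernel h4a] using hint.norm.mul_const _

variable [SFinite μ]

theorem integrable_gaussianTransform_two_mul_sq (ha : 0 < a)
    (hint : Integrable (fun p : V × V => g p.1 * gaussianKernel a p.1 p.2 * g p.2) (μ.prod μ)) :
    Integrable fun z => gaussianTransform (2 * a) μ g z ^ 2 := by
  simpa only [gaussianTransform_two_mul_sq] using
    (integrable_prod_gaussianKernel_midpoint ha hint).integral_prod_right

theorem integral_gaussianTransform_two_mul_sq (ha : 0 < a)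
    (hint : Integrable (fun p : V × V => g p.1 * gaussianKernel a p.1 p.2 * g p.2) (μ.prod μ)) :
    ∫ z, gaussianTransform (2 * a) μ g z ^ 2 =
      (∫ p : V × V, g p.1 * gaussianKernel a p.1 p.2 * g p.2 ∂(μ.prod μ)) *
        (Real.pi / (4 * a)) ^ (Module.finrank ℝ V / 2 : ℝ) := by
  have h4a : 0 < 4 * a := by positivity
  simp only [gaussianTransform_two_mul_sq]
  rw [← integral_integral_swap (integrable_prod_gaussianKernel_midpoint ha hint)]
  simp only [integral_const_mul, integral_gaussianKernel h4a, integral_mul_const]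

theorem integral_mul_gaussianKernel_mul_pos (ha : 0 < a)
    (hint : Integrable (fun p : V × V => g p.1 * gaussianKernel a p.1 p.2 * g p.2) (μ.prod μ))
    (hg : ¬ g =ᵐ[μ] 0) :
    0 < ∫ p : V × V, g p.1 * gaussianKernel a p.1 p.2 * g p.2 ∂(μ.prod μ) := by
  obtain ⟨y, hy⟩ := exists_integrable_gaussianKernel_mul hint hg
  by_contra! energy_nonpos
  have integral_sq_nonpos : ∫ z, gaussianTransform (2 * a) μ g z ^ 2 ≤ 0 := by
    rw [integral_gaussianTransform_two_mul_sq ha hint]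
    exact mul_nonpos_of_nonpos_of_nonneg energy_nonpos (by positivity)
  have sq_ae_zero : (fun z => gaussianTransform (2 * a) μ g z ^ 2) =ᵐ[volume] 0 :=
    (integral_eq_zero_iff_of_nonneg (fun z => sq_nonneg _)
      (integrable_gaussianTransform_two_mul_sq ha hint)).1
      (integral_sq_nonpos.antisymm (integral_nonneg fun z => sq_nonneg _))
  have sq_eq_zero : (fun z => gaussianTransform (2 * a) μ g z ^ 2) = 0 :=
    ((continuous_gaussianTransform_two_mul ha.le hy).pow 2).ae_eq_iff_eq volume continuous_zero
      |>.1 sq_ae_zero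
  exact hg <| ae_eq_zero_of_gaussianTransform_eq_zero (by positivity)
    (integrable_gaussianKernel_two_mul_mul ha.le hy)
    (funext fun z => pow_eq_zero_iff two_ne_zero |>.1 (congrFun sq_eq_zero z))

end InnerProductSpace

end GaussianKernel

theorem stmt_7_general {V : Type*} [NormedAddCommGroup V] [InnerProductSpace ℝ V]
    [FiniteDimensional ℝ V] [MeasurableSpace V] [BorelSpace V] {σ : ℝ} (hσ : σ ≠ 0) {g : V → ℝ}
    (hg : MemLp g 2) (hg_ne : ¬ g =ᵐ[volume] 0) :
    Integrable (fun z : V × V => g z.1 * Real.exp (-‖z.1 - z.2‖ ^ 2 / (2 * σ ^ 2)) * g z.2) ∧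
    0 < ∫ z : V × V, g z.1 * Real.exp (-‖z.1 - z.2‖ ^ 2 / (2 * σ ^ 2)) * g z.2 := by
  have kernel_eq (x y : V) :
      Real.exp (-‖x - y‖ ^ 2 / (2 * σ ^ 2)) = gaussianKernel (1 / (2 * σ ^ 2)) x y := by
    rw [gaussianKernel]
    ring_nf
  have ha : 0 < 1 / (2 * σ ^ 2) := by positivity
  simp only [kernel_eq]
  have hint : Integrable (fun z : V × V =>
      g z.1 * gaussianKernel (1 / (2 * σ ^ 2)) z.1 z.2 * g z.2) (volume.prod volume) := by
    simpa only [gaussianKernel, sub_zero] using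
      integrable_mul_comp_sub_mul_of_memLp_two (integrable_gaussianKernel ha (0 : V)) hg hg
  exact ⟨hint, integral_mul_gaussianKernel_mul_pos ha hint hg_ne⟩

/-- The Gaussian kernel on ℝ^d is integrally strictly positive definite. -/
theorem stmt_7 (d : ℕ) (hd : 1 ≤ d) (σ : ℝ) (hσ : 0 < σ)
    (g : EuclideanSpace ℝ (Fin d) → ℝ)
    (hg_meas : Measurable g)
    (hg_sq : Integrable (fun x => (g x) ^ 2))
    (hg_pos : 0 < ∫ x, (g x) ^ 2) :
    Integrable (fun z : EuclideanSpace ℝ (Fin d) × EuclideanSpace ℝ (Fin d) =>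
      g z.1 * Real.exp (-‖z.1 - z.2‖ ^ 2 / (2 * σ ^ 2)) * g z.2) ∧
    0 < ∫ z : EuclideanSpace ℝ (Fin d) × EuclideanSpace ℝ (Fin d),
      g z.1 * Real.exp (-‖z.1 - z.2‖ ^ 2 / (2 * σ ^ 2)) * g z.2 :=
  stmt_7_general hσ.ne' ((memLp_two_iff_integrable_sq hg_meas.aestronglyMeasurable).2 hg_sq)
    fun hg_zero => hg_pos.ne' <| integral_eq_zero_of_ae <| hg_zero.mono fun x hx => by simp [hx]
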